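/- Let 1 ≤ k < n, let F be a Banach space, and assume that every continuous k-linear map from E_1 × ⋯ × E_k to F is absolutely (p;q_1,…,q_k)-summing, and that E_{k+1}, …, E_n have cotype 2. If p ≤ q and 1 ≤ q_i ≤ 2 for i = k+1,…,n satisfy Σ_{i=k+1}^n 1/q_i − 1/q = (n−k) − 1/p, then every continuous n-linear map from E_1 × ⋯ × E_n to F is absolutely (q;q_1,…,q_n)-summing. -/

import Mathlib

open scoped BigOperators NNReal ENNReal

/-- The weak `ℓ_r` norm of a finite family `(x_j)` in a normed space:
`sup_{‖φ‖ ≤ 1} (∑_j ‖φ(x_j)‖^r)^(1/r)`. -/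
noncomputable def weakNorm (𝕜 : Type*) [RCLike 𝕜] {E : Type*} [NormedAddCommGroup E]
    [NormedSpace 𝕜 E] (r : ℝ) {m : ℕ} (x : Fin m → E) : ℝ :=
  ⨆ φ : {φ : E →L[𝕜] 𝕜 // ‖φ‖ ≤ 1}, (∑ j, ‖φ.1 (x j)‖ ^ r) ^ (1 / r)

/-- The Rademacher norm of a finite family `(x_j)_{j=1}^m` in a normed space:
`(2^{-m} ∑_{ε ∈ {-1,1}^m} ‖∑_j ε_j x_j‖²)^{1/2}`. -/
noncomputable def radNorm {E : Type*} [NormedAddCommGroup E] {m : ℕ} (x : Fin m → E) : ℝ :=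
  ((∑ ε : Fin m → Bool, ‖∑ j, (if ε j then x j else -x j)‖ ^ 2) / (2 : ℝ) ^ m) ^ ((1 : ℝ) / 2)

/-- A continuous multilinear map is absolutely `(p; p₁, …, pₙ)`-summing. -/
def IsAbsSumming {𝕜 : Type*} [RCLike 𝕜] {n : ℕ} {E : Fin n → Type*}
    [∀ i, NormedAddCommGroup (E i)] [∀ i, NormedSpace 𝕜 (E i)]
    {F : Type*} [NormedAddCommGroup F] [NormedSpace 𝕜 F]
    (p : ℝ) (ps : Fin n → ℝ) (A : ContinuousMultilinearMap 𝕜 E F) : Prop :=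
  ∃ C > 0, ∀ (m : ℕ) (x : ∀ i, Fin m → E i),
    (∑ j, ‖A (fun i => x i j)‖ ^ p) ^ (1 / p) ≤ C * ∏ i, weakNorm 𝕜 (ps i) (x i)

/-- A Banach space has cotype 2. -/
def HasCotype2 (X : Type*) [NormedAddCommGroup X] : Prop :=
  ∃ C > 0, ∀ (m : ℕ) (x : Fin m → X),
    (∑ j, ‖x j‖ ^ 2) ^ ((1 : ℝ) / 2) ≤ C * radNorm x


namespace CoincidenceAux

lemma weak_bdd (𝕜 : Type*) [RCLike 𝕜] {E : Type*} [NormedAddCommGroup E]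
    [NormedSpace 𝕜 E] {r : ℝ} (hr : 0 < r) {m : ℕ} (x : Fin m → E) :
    BddAbove (Set.range fun φ : {φ : E →L[𝕜] 𝕜 // ‖φ‖ ≤ 1} =>
      (∑ j, ‖φ.1 (x j)‖ ^ r) ^ (1 / r)) := by
  refine ⟨(∑ j, ‖x j‖ ^ r) ^ (1 / r), ?_⟩
  rintro _ ⟨φ, rfl⟩
  dsimp only
  gcongr with j
  calc ‖φ.1 (x j)‖ ≤ ‖φ.1‖ * ‖x j‖ := φ.1.le_opNorm _
    _ ≤ 1 * ‖x j‖ := by gcongr; exact φ.2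
    _ = _ := one_mul _

lemma le_weak {𝕜 : Type*} [RCLike 𝕜] {E : Type*} [NormedAddCommGroup E]
    [NormedSpace 𝕜 E] {r : ℝ} (hr : 0 < r) {m : ℕ} (x : Fin m → E)
    (φ : E →L[𝕜] 𝕜) (hφ : ‖φ‖ ≤ 1) :
    (∑ j, ‖φ (x j)‖ ^ r) ^ (1 / r) ≤ weakNorm 𝕜 r x :=
  le_ciSup (weak_bdd 𝕜 hr x) ⟨φ, hφ⟩

lemma weak_nonneg (𝕜 : Type*) [RCLike 𝕜] {E : Type*} [NormedAddCommGroup E]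
    [NormedSpace 𝕜 E] (r : ℝ) {m : ℕ} (x : Fin m → E) : 0 ≤ weakNorm 𝕜 r x :=
  Real.iSup_nonneg fun _ => by positivity

lemma weak_le {𝕜 : Type*} [RCLike 𝕜] {E : Type*} [NormedAddCommGroup E]
    [NormedSpace 𝕜 E] {r : ℝ} {m : ℕ} (x : Fin m → E) {a : ℝ}
    (h : ∀ φ : E →L[𝕜] 𝕜, ‖φ‖ ≤ 1 → (∑ j, ‖φ (x j)‖ ^ r) ^ (1 / r) ≤ a) :
    weakNorm 𝕜 r x ≤ a := by
  haveI : Nonempty {φ : E →L[𝕜] 𝕜 // ‖φ‖ ≤ 1} := ⟨⟨0, by simp⟩⟩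
  exact ciSup_le fun φ => h φ.1 φ.2

/-- the sign attached to a Boolean -/
def sg (𝕜 : Type*) [RCLike 𝕜] (b : Bool) : 𝕜 := if b then 1 else -1

lemma norm_sg (𝕜 : Type*) [RCLike 𝕜] (b : Bool) : ‖sg 𝕜 b‖ = 1 := by
  cases b <;> simp [sg]

lemma sum_sg_le {𝕜 : Type*} [RCLike 𝕜] {E : Type*} [NormedAddCommGroup E]
    [NormedSpace 𝕜 E] {m : ℕ} (x : Fin m → E) (ε : Fin m → Bool) :
    ‖∑ j, sg 𝕜 (ε j) • x j‖ ≤ weakNorm 𝕜 1 x := by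
  obtain ⟨φ, hφ, hφx⟩ := exists_dual_vector'' 𝕜 (∑ j, sg 𝕜 (ε j) • x j)
  have h1 := le_weak one_pos x φ hφ
  refine le_trans ?_ h1
  have h2 : ‖φ (∑ j, sg 𝕜 (ε j) • x j)‖ = ‖∑ j, sg 𝕜 (ε j) • x j‖ := by
    rw [hφx]; simp
  rw [← h2, map_sum]
  refine (norm_sum_le _ _).trans ?_
  simp [norm_sg]

lemma weak_smul_le {𝕜 : Type*} [RCLike 𝕜] {E : Type*} [NormedAddCommGroup E]
    [NormedSpace 𝕜 E] {m : ℕ} (y : Fin m → E) (c : Fin m → ℝ) (hc : ∀ j, 0 ≤ c j)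
    {q r : ℝ} (hq : 0 < q) (hr : 1 ≤ r) :
    weakNorm 𝕜 1 (fun j => ((c j ^ (q * (1 - 1 / r)) : ℝ) : 𝕜) • y j) ≤
      (∑ j, c j ^ q) ^ (1 - 1 / r) * weakNorm 𝕜 r y := by
  apply weak_le
  intro φ hφ
  have hw := le_weak (by linarith : 0 < r) y φ hφ
  have hS : 0 ≤ (∑ j, c j ^ q) := Finset.sum_nonneg fun j _ => Real.rpow_nonneg (hc j) _
  have hn : ∀ j, ‖((c j ^ (q * (1 - 1 / r)) : ℝ) : 𝕜)‖ = c j ^ (q * (1 - 1 / r)) := by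
    intro j
    rw [RCLike.norm_ofReal, abs_of_nonneg (Real.rpow_nonneg (hc j) _)]
  simp only [map_smul, norm_smul, hn, Real.rpow_one, one_div_one]
  rcases eq_or_lt_of_le hr with rfl | hr1
  · simpa using hw
  · have hpq : (Real.conjExponent r).HolderConjugate r :=
      (Real.HolderConjugate.conjExponent hr1).symm
    have hinv : 1 / Real.conjExponent r = 1 - 1 / r := by
      have := hpq.inv_add_inv_eq_one
      simp only [one_div]; linarith
    have := Real.inner_le_Lp_mul_Lq_of_nonneg Finset.univ hpq
      (f := fun j => c j ^ (q * (1 - 1 / r))) (g := fun j => ‖φ (y j)‖)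
      (fun j _ => Real.rpow_nonneg (hc j) _) (fun j _ => norm_nonneg _)
    refine this.trans ?_
    have he : ∀ j, (c j ^ (q * (1 - 1 / r))) ^ (Real.conjExponent r) = c j ^ q := by
      intro j
      rw [← Real.rpow_mul (hc j), ← hinv]
      congr 1
      have := hpq.pos.ne'
      field_simp
    simp only [he, hinv]
    gcongr

/-- partially randomized vector -/
noncomputable def rv (𝕜 : Type*) [RCLike 𝕜] {ι : Type*} [DecidableEq ι] {E : ι → Type*}
    [∀ i, NormedAddCommGroup (E i)] [∀ i, NormedSpace 𝕜 (E i)] {m : ℕ}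
    (v : ∀ i, Fin m → E i) (j : Fin m) (S : Finset ι) (ε : ι → Fin m → Bool) (i : ι) : E i :=
  if i ∈ S then ∑ j', sg 𝕜 (ε i j') • v i j' else v i j

lemma rv_insert {𝕜 : Type*} [RCLike 𝕜] {ι : Type*} [DecidableEq ι] {E : ι → Type*}
    [∀ i, NormedAddCommGroup (E i)] [∀ i, NormedSpace 𝕜 (E i)] {m : ℕ}
    (v : ∀ i, Fin m → E i) (j : Fin m) (S : Finset ι) (ε ε' : ι → Fin m → Bool) (i : ι)
    (h : ∀ i', i' ≠ i → ε' i' = ε i') :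
    rv 𝕜 v j (insert i S) ε' =
      Function.update (rv 𝕜 v j S ε) i (∑ j', sg 𝕜 (ε' i j') • v i j') := by
  ext i'
  by_cases hi : i' = i
  · subst hi; simp [rv]
  · simp [rv, hi, h i' hi]

lemma pow_le_of_two_mul_le {a b c p : ℝ} (hp : 0 < p) (ha : 0 ≤ a) (hb : 0 ≤ b) (hc : 0 ≤ c)
    (h : 2 * a ≤ b + c) : a ^ p ≤ b ^ p + c ^ p := by
  rcases le_total b c with hbc | hbc
  · have := Real.rpow_le_rpow ha (by linarith : a ≤ c) hp.le
    have := Real.rpow_nonneg hb p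
    linarith
  · have := Real.rpow_le_rpow ha (by linarith : a ≤ b) hp.le
    have := Real.rpow_nonneg hc p
    linarith

lemma flip_involutive {ι : Type*} [DecidableEq ι] {m : ℕ} (i : ι) (j : Fin m) :
    Function.Involutive (fun ε : ι → Fin m → Bool =>
      Function.update ε i (Function.update (ε i) j (!(ε i j)))) := by
  intro ε
  simp

lemma sign_step {𝕜 : Type*} [RCLike 𝕜] {ι : Type*} [DecidableEq ι] [Fintype ι] {E : ι → Type*}
    [∀ i, NormedAddCommGroup (E i)] [∀ i, NormedSpace 𝕜 (E i)]
    {F : Type*} [NormedAddCommGroup F] [NormedSpace 𝕜 F]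
    (A : ContinuousMultilinearMap 𝕜 E F) {p : ℝ} (hp : 0 < p) {m : ℕ}
    (v : ∀ i, Fin m → E i) (j : Fin m) (S : Finset ι) (i : ι) (hi : i ∉ S) :
    ∑ ε : ι → Fin m → Bool, ‖A (rv 𝕜 v j S ε)‖ ^ p ≤
      2 * ∑ ε : ι → Fin m → Bool, ‖A (rv 𝕜 v j (insert i S) ε)‖ ^ p := by
  set fl : (ι → Fin m → Bool) → (ι → Fin m → Bool) := fun ε =>
      Function.update ε i (Function.update (ε i) j (!(ε i j))) with hfl
  have hbij : ∑ ε, ‖A (rv 𝕜 v j (insert i S) (fl ε))‖ ^ p =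
      ∑ ε, ‖A (rv 𝕜 v j (insert i S) ε)‖ ^ p :=
    (flip_involutive i j).bijective.sum_comp
      (fun ε => ‖A (rv 𝕜 v j (insert i S) ε)‖ ^ p)
  rw [two_mul]
  conv_rhs => arg 2; rw [← hbij]
  rw [← Finset.sum_add_distrib]
  refine Finset.sum_le_sum fun ε _ => ?_
  refine pow_le_of_two_mul_le hp (norm_nonneg _) (norm_nonneg _) (norm_nonneg _) ?_
  rw [rv_insert v j S ε ε i (fun _ _ => rfl),
    rv_insert v j S ε (fl ε) i (fun i' h' => by simp [hfl, h'])]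
  have hself : rv 𝕜 v j S ε = Function.update (rv 𝕜 v j S ε) i (v i j) := by
    rw [eq_comm, Function.update_eq_iff]
    simp [rv, hi]
  have hd : ∑ j', sg 𝕜 (ε i j') • v i j' - ∑ j', sg 𝕜 (fl ε i j') • v i j' =
      (2 * sg 𝕜 (ε i j)) • v i j := by
    rw [← Finset.sum_sub_distrib, Finset.sum_eq_single j]
    · rw [← sub_smul]
      congr 1
      simp only [hfl, Function.update_self]
      cases ε i j <;> simp [sg] <;> norm_num
    · intro j' _ hj'
      simp [hfl, hj']
    · simp
  have h2 : 2 * ‖A (rv 𝕜 v j S ε)‖ =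
      ‖A (Function.update (rv 𝕜 v j S ε) i (∑ j', sg 𝕜 (ε i j') • v i j')) -
        A (Function.update (rv 𝕜 v j S ε) i (∑ j', sg 𝕜 (fl ε i j') • v i j'))‖ := by
    rw [← A.map_update_sub, hd, A.map_update_smul, ← hself, norm_smul, norm_mul, norm_sg]
    simp
  rw [h2]
  exact norm_sub_le _ _

lemma sign_all {𝕜 : Type*} [RCLike 𝕜] {ι : Type*} [DecidableEq ι] [Fintype ι] {E : ι → Type*}
    [∀ i, NormedAddCommGroup (E i)] [∀ i, NormedSpace 𝕜 (E i)]
    {F : Type*} [NormedAddCommGroup F] [NormedSpace 𝕜 F]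
    (A : ContinuousMultilinearMap 𝕜 E F) {p : ℝ} (hp : 0 < p) {m : ℕ}
    (v : ∀ i, Fin m → E i) (j : Fin m) (S : Finset ι) :
    ∑ _ε : ι → Fin m → Bool, ‖A (fun i => v i j)‖ ^ p ≤
      2 ^ S.card * ∑ ε : ι → Fin m → Bool, ‖A (rv 𝕜 v j S ε)‖ ^ p := by
  induction S using Finset.induction_on with
  | empty =>
    have : ∀ ε, rv 𝕜 v j ∅ ε = fun i => v i j := fun ε => by ext i; simp [rv]
    simp [this]
  | insert i S hi ih =>
    refine ih.trans ?_
    rw [Finset.card_insert_of_notMem hi, pow_succ, mul_assoc]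
    gcongr
    exact sign_step A hp v j S i hi

lemma uniform_const {𝕜 : Type*} [RCLike 𝕜] {n : ℕ} {E : Fin n → Type*}
    [∀ i, NormedAddCommGroup (E i)] [∀ i, NormedSpace 𝕜 (E i)]
    {F : Type*} [NormedAddCommGroup F] [NormedSpace 𝕜 F] [CompleteSpace F]
    {p : ℝ} (hp : 0 < p) (ps : Fin n → ℝ)
    (h : ∀ B : ContinuousMultilinearMap 𝕜 E F, IsAbsSumming p ps B) :
    ∃ C : ℝ, 0 < C ∧ ∀ (B : ContinuousMultilinearMap 𝕜 E F) (m : ℕ) (x : ∀ i, Fin m → E i),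
      ∑ j, ‖B (fun i => x i j)‖ ^ p ≤ (C * ‖B‖ * ∏ i, weakNorm 𝕜 (ps i) (x i)) ^ p := by
  have hw : ∀ (m : ℕ) (x : ∀ i, Fin m → E i), 0 ≤ ∏ i, weakNorm 𝕜 (ps i) (x i) :=
    fun m x => Finset.prod_nonneg fun i _ => weak_nonneg 𝕜 _ _
  let K : ℕ → Set (ContinuousMultilinearMap 𝕜 E F) := fun N =>
    {B | ∀ (m : ℕ) (x : ∀ i, Fin m → E i),
      ∑ j, ‖B (fun i => x i j)‖ ^ p ≤ (N * ∏ i, weakNorm 𝕜 (ps i) (x i)) ^ p}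
  have hKc : ∀ N, IsClosed (K N) := by
    intro N
    simp only [K, Set.setOf_forall]
    refine isClosed_iInter fun m => isClosed_iInter fun x => ?_
    refine isClosed_le ?_ continuous_const
    refine continuous_finsetSum _ fun j _ => ?_
    refine Continuous.rpow_const ?_ (fun _ => Or.inr hp.le)
    exact (continuous_eval_const _).norm
  have hKu : ⋃ N, K N = Set.univ := by
    rw [Set.eq_univ_iff_forall]
    intro B
    obtain ⟨C, hC, hB⟩ := h B
    obtain ⟨N, hN⟩ := exists_nat_ge C
    refine Set.mem_iUnion.2 ⟨N, fun m x => ?_⟩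
    have hS : 0 ≤ ∑ j, ‖B (fun i => x i j)‖ ^ p := by positivity
    have h1 := hB m x
    have h2 : (∑ j, ‖B (fun i => x i j)‖ ^ p) ^ (1 / p) ≤
        N * ∏ i, weakNorm 𝕜 (ps i) (x i) := h1.trans (by gcongr; exact hw m x)
    have h3 := Real.rpow_le_rpow (by positivity) h2 hp.le
    rwa [← Real.rpow_mul hS, one_div_mul_cancel hp.ne', Real.rpow_one] at h3
  obtain ⟨N, B0, hB0⟩ := nonempty_interior_of_iUnion_of_closed hKc hKu
  obtain ⟨r, hr, hball⟩ := Metric.isOpen_iff.1 isOpen_interior B0 hB0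
  have hB0K : B0 ∈ K N := interior_subset hB0
  -- bound for small maps
  have hsmall : ∀ D : ContinuousMultilinearMap 𝕜 E F, ‖D‖ < r → ∀ (m : ℕ)
      (x : ∀ i, Fin m → E i), ∑ j, ‖D (fun i => x i j)‖ ^ p ≤
        2 ^ p * (2 * (N * ∏ i, weakNorm 𝕜 (ps i) (x i)) ^ p) := by
    intro D hD m x
    have hDK : B0 + D ∈ K N := interior_subset (hball (by simpa using hD))
    have h1 := hDK m x
    have h2 := hB0K m x
    calc ∑ j, ‖D (fun i => x i j)‖ ^ p
        ≤ ∑ j, 2 ^ p * (‖(B0 + D) (fun i => x i j)‖ ^ p + ‖B0 (fun i => x i j)‖ ^ p) := by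
          refine Finset.sum_le_sum fun j _ => ?_
          have : ‖D (fun i => x i j)‖ ≤ ‖(B0 + D) (fun i => x i j)‖ + ‖B0 (fun i => x i j)‖ := by
            have := norm_sub_le ((B0 + D) (fun i => x i j)) (B0 (fun i => x i j))
            simpa using this
          have h3 := pow_le_of_two_mul_le hp (a := ‖D (fun i => x i j)‖ / 2) (by positivity)
            (b := ‖(B0 + D) (fun i => x i j)‖) (c := ‖B0 (fun i => x i j)‖)
            (norm_nonneg _) (norm_nonneg _) (by linarith)
          rw [Real.div_rpow (norm_nonneg _) (by norm_num),
            div_le_iff₀ (by positivity)] at h3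
          linarith
      _ = 2 ^ p * (∑ j, ‖(B0 + D) (fun i => x i j)‖ ^ p + ∑ j, ‖B0 (fun i => x i j)‖ ^ p) := by
          rw [← Finset.mul_sum, Finset.sum_add_distrib]
      _ ≤ _ := by
          gcongr
          linarith
  refine ⟨2 / r * (2 * 2 ^ (1 / p) * (N + 1)), by positivity, fun B m x => ?_⟩
  by_cases hB : ‖B‖ = 0
  · rw [norm_eq_zero] at hB
    subst hB
    simp [Real.zero_rpow hp.ne']
  have hBpos : 0 < ‖B‖ := lt_of_le_of_ne (norm_nonneg _) (Ne.symm hB)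
  set t : ℝ := r / 2 / ‖B‖ with ht
  have htpos : 0 < t := by positivity
  have hD : ‖((t : ℝ) : 𝕜) • B‖ < r := by
    rw [norm_smul, RCLike.norm_ofReal, abs_of_pos htpos, ht, div_mul_cancel₀ _ hB]
    linarith
  have h1 := hsmall _ hD m x
  have h2 : ∑ j, ‖(((t : ℝ) : 𝕜) • B) (fun i => x i j)‖ ^ p =
      t ^ p * ∑ j, ‖B (fun i => x i j)‖ ^ p := by
    rw [Finset.mul_sum]
    refine Finset.sum_congr rfl fun j _ => ?_
    rw [ContinuousMultilinearMap.smul_apply, norm_smul, RCLike.norm_ofReal, abs_of_pos htpos,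
      Real.mul_rpow htpos.le (norm_nonneg _)]
  rw [h2] at h1
  set W := ∏ i, weakNorm 𝕜 (ps i) (x i) with hW
  have hW0 : 0 ≤ W := hw m x
  have h3 : ∑ j, ‖B (fun i => x i j)‖ ^ p ≤ (t⁻¹ * (2 * 2 ^ (1 / p) * (N * W))) ^ p := by
    rw [Real.mul_rpow (by positivity) (by positivity), Real.mul_rpow (by positivity) (by positivity),
      Real.mul_rpow (by positivity) (by positivity), ← Real.rpow_mul (by norm_num),
      one_div_mul_cancel hp.ne', Real.rpow_one, Real.inv_rpow htpos.le, inv_mul_eq_div,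
      le_div_iff₀ (by positivity)]
    linarith
  refine h3.trans (Real.rpow_le_rpow (by positivity) ?_ hp.le)
  have : t⁻¹ = 2 / r * ‖B‖ := by rw [ht]; field_simp
  rw [this]
  calc 2 / r * ‖B‖ * (2 * 2 ^ (1 / p) * (N * W))
      ≤ 2 / r * ‖B‖ * (2 * 2 ^ (1 / p) * ((N + 1) * W)) := by gcongr; linarith
    _ = _ := by ring

/-- freeze the last `l` variables -/
lemma exists_freeze {𝕜 : Type*} [RCLike 𝕜] {k l : ℕ}
    {E : Fin (k + l) → Type*} [∀ i, NormedAddCommGroup (E i)] [∀ i, NormedSpace 𝕜 (E i)]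
    {F : Type*} [NormedAddCommGroup F] [NormedSpace 𝕜 F]
    (A : ContinuousMultilinearMap 𝕜 E F) (y : ∀ i : Fin l, E (Fin.natAdd k i)) :
    ∃ B : ContinuousMultilinearMap 𝕜 (fun i : Fin k => E (Fin.castAdd l i)) F,
      (∀ z : ∀ i, E i, (∀ i, z (Fin.natAdd k i) = y i) →
        A z = B (fun i => z (Fin.castAdd l i))) ∧ ‖B‖ ≤ ‖A‖ * ∏ i, ‖y i‖ := by
  let J : (∀ i : Fin k, E (Fin.castAdd l i)) → ∀ i, E i :=
    fun u => Fin.addCases (motive := E) u y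
  have hJl : ∀ u i, J u (Fin.castAdd l i) = u i := fun u i => by simp [J]
  have hJr : ∀ u i, J u (Fin.natAdd k i) = y i := fun u i => by simp [J]
  have hJu : ∀ [DecidableEq (Fin k)] u i a,
      J (Function.update u i a) = Function.update (J u) (Fin.castAdd l i) a := by
    intro _ u i a
    ext i'
    induction i' using Fin.addCases with
    | left i' =>
      rw [hJl]
      by_cases hi : i' = i
      · subst hi; simp
      · have : Fin.castAdd l i' ≠ Fin.castAdd l i := by simpa using hi
        rw [Function.update_of_ne hi, Function.update_of_ne this, hJl]
    | right i' =>
      have : Fin.natAdd k i' ≠ Fin.castAdd l i := by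
        intro h
        have := congrArg Fin.val h
        simp at this
        omega
      rw [hJr, Function.update_of_ne this, hJr]
  let M : MultilinearMap 𝕜 (fun i : Fin k => E (Fin.castAdd l i)) F :=
    { toFun := fun u => A (J u)
      map_update_add' := fun u i a b => by simp only [hJu, A.map_update_add]
      map_update_smul' := fun u i c a => by simp only [hJu, A.map_update_smul] }
  have hM : ∀ u, ‖M u‖ ≤ (‖A‖ * ∏ i, ‖y i‖) * ∏ i, ‖u i‖ := by
    intro u
    refine (A.le_opNorm (J u)).trans_eq ?_
    rw [Fin.prod_univ_add]
    simp only [hJl, hJr]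
    ring
  refine ⟨M.mkContinuous _ hM, fun z hz => ?_, M.mkContinuous_norm_le (by positivity) hM⟩
  change A z = A (J _)
  congr 1
  ext i
  induction i using Fin.addCases with
  | left i => rw [hJl]
  | right i => rw [hJr, hz]

/-- the case `q_i = 1` for `i > k` -/
lemma one_case {𝕜 : Type*} [RCLike 𝕜] {k l : ℕ}
    (E : Fin (k + l) → Type*) [∀ i, NormedAddCommGroup (E i)] [∀ i, NormedSpace 𝕜 (E i)]
    (F : Type*) [NormedAddCommGroup F] [NormedSpace 𝕜 F] [CompleteSpace F]
    (p : ℝ) (hp : 0 < p) (ps : Fin k → ℝ)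
    (hcoin : ∀ B : ContinuousMultilinearMap 𝕜 (fun i : Fin k => E (Fin.castAdd l i)) F,
      IsAbsSumming p ps B)
    (A : ContinuousMultilinearMap 𝕜 E F) :
    ∃ C : ℝ, 0 < C ∧ ∀ (m : ℕ) (x : ∀ i, Fin m → E i),
      (∑ j, ‖A (fun i => x i j)‖ ^ p) ^ (1 / p) ≤
        C * ((∏ i, weakNorm 𝕜 (ps i) (x (Fin.castAdd l i))) *
          ∏ i, weakNorm 𝕜 1 (x (Fin.natAdd k i))) := by
  obtain ⟨C, hC, hU⟩ := uniform_const hp ps hcoin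
  refine ⟨(2 ^ l) ^ (1 / p) * (C * (‖A‖ + 1)), by positivity, fun m x => ?_⟩
  set W := ∏ i, weakNorm 𝕜 (ps i) (x (Fin.castAdd l i)) with hW
  set V := ∏ i, weakNorm 𝕜 1 (x (Fin.natAdd k i)) with hV
  have hW0 : 0 ≤ W := Finset.prod_nonneg fun i _ => weak_nonneg 𝕜 _ _
  have hV0 : 0 ≤ V := Finset.prod_nonneg fun i _ => weak_nonneg 𝕜 _ _
  let S : Finset (Fin (k + l)) := Finset.univ.map (Fin.natAddEmb k)
  have hScard : S.card = l := by simp [S]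
  have hSr : ∀ i : Fin l, Fin.natAdd k i ∈ S := fun i => by simp [S]
  have hSl : ∀ i : Fin k, Fin.castAdd l i ∉ S := fun i => by
    simp only [S, Finset.mem_map, Finset.mem_univ, true_and, not_exists]
    intro a h
    have := congrArg Fin.val h
    simp at this
    omega
  have key : ∀ ε : Fin (k + l) → Fin m → Bool,
      ∑ j, ‖A (rv 𝕜 x j S ε)‖ ^ p ≤ (C * (‖A‖ + 1) * (W * V)) ^ p := by
    intro ε
    obtain ⟨B, hB, hBn⟩ := exists_freeze A
      (fun i : Fin l => ∑ j', sg 𝕜 (ε (Fin.natAdd k i) j') • x (Fin.natAdd k i) j')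
    have h1 : ∀ j, A (rv 𝕜 x j S ε) = B (fun i => x (Fin.castAdd l i) j) := by
      intro j
      rw [hB (rv 𝕜 x j S ε) (fun i => by simp [rv, hSr])]
      congr 1
      ext i
      simp [rv, hSl]
    simp only [h1]
    refine (hU B m (fun i => x (Fin.castAdd l i))).trans ?_
    refine Real.rpow_le_rpow (by positivity) ?_ hp.le
    have h2 : ‖B‖ ≤ (‖A‖ + 1) * V := by
      refine hBn.trans ?_
      gcongr
      · linarith
      · exact Finset.prod_le_prod (fun _ _ => norm_nonneg _) fun i _ => sum_sg_le _ _
    calc C * ‖B‖ * W ≤ C * ((‖A‖ + 1) * V) * W := by gcongr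
      _ = _ := by ring
  have hcard : (0 : ℝ) < Fintype.card (Fin (k + l) → Fin m → Bool) := by
    exact_mod_cast Fintype.card_pos
  have hfin : ∑ j, ‖A (fun i => x i j)‖ ^ p ≤ 2 ^ l * (C * (‖A‖ + 1) * (W * V)) ^ p := by
    refine le_of_mul_le_mul_left ?_ hcard
    calc (Fintype.card (Fin (k + l) → Fin m → Bool) : ℝ) * ∑ j, ‖A (fun i => x i j)‖ ^ p
        = ∑ j, ∑ _ε : Fin (k + l) → Fin m → Bool, ‖A (fun i => x i j)‖ ^ p := by
          rw [Finset.mul_sum]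
          simp only [Finset.sum_const, Finset.card_univ, nsmul_eq_mul]
      _ ≤ ∑ j, 2 ^ l * ∑ ε : Fin (k + l) → Fin m → Bool, ‖A (rv 𝕜 x j S ε)‖ ^ p := by
          refine Finset.sum_le_sum fun j _ => ?_
          have := sign_all A hp x j S
          rwa [hScard] at this
      _ = 2 ^ l * ∑ ε : Fin (k + l) → Fin m → Bool, ∑ j, ‖A (rv 𝕜 x j S ε)‖ ^ p := by
          rw [← Finset.mul_sum, Finset.sum_comm]
      _ ≤ 2 ^ l * ∑ _ε : Fin (k + l) → Fin m → Bool, (C * (‖A‖ + 1) * (W * V)) ^ p := by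
          gcongr with ε
          exact key ε
      _ = _ := by
          simp only [Finset.sum_const, Finset.card_univ, nsmul_eq_mul]
          ring
  refine (Real.rpow_le_rpow (by positivity) hfin (by positivity)).trans_eq ?_
  rw [Real.mul_rpow (by positivity) (by positivity), ← Real.rpow_mul (by positivity),
    mul_one_div_cancel hp.ne', Real.rpow_one]
  ring

end CoincidenceAux

open CoincidenceAux in
/-- If every continuous `k`-linear map `E₁ × ⋯ × E_k → F` is absolutely
`(p; q₁, …, q_k)`-summing, `E_{k+1}, …, E_n` have cotype 2 (here `n = k + l`), `p ≤ q`,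
`1 ≤ q_i ≤ 2` for `i > k`, and `∑_{i>k} 1/q_i − 1/q = (n − k) − 1/p`, then every continuous
`n`-linear map `E₁ × ⋯ × E_n → F` is absolutely `(q; q₁, …, q_n)`-summing. -/
theorem coincidence_extension {𝕜 : Type*} [RCLike 𝕜] {k l : ℕ} (hk : 1 ≤ k) (hl : 1 ≤ l)
    (E : Fin (k + l) → Type*) [∀ i, NormedAddCommGroup (E i)] [∀ i, NormedSpace 𝕜 (E i)]
    [∀ i, CompleteSpace (E i)]
    (F : Type*) [NormedAddCommGroup F] [NormedSpace 𝕜 F] [CompleteSpace F]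
    (p q : ℝ) (hp : 0 < p) (hpq : p ≤ q)
    (qs : Fin (k + l) → ℝ) (hqs0 : ∀ i, 0 < qs i)
    (hqs : ∀ i : Fin l, 1 ≤ qs (Fin.natAdd k i) ∧ qs (Fin.natAdd k i) ≤ 2)
    (hcot : ∀ i : Fin l, HasCotype2 (E (Fin.natAdd k i)))
    (hcoin : ∀ B : ContinuousMultilinearMap 𝕜 (fun i : Fin k => E (Fin.castAdd l i)) F,
      IsAbsSumming p (fun i => qs (Fin.castAdd l i)) B)
    (heq : (∑ i : Fin l, 1 / qs (Fin.natAdd k i)) - 1 / q = (l : ℝ) - 1 / p)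
    (A : ContinuousMultilinearMap 𝕜 E F) :
    IsAbsSumming q qs A := by
  obtain ⟨C, hC, hone⟩ := one_case E F p hp _ hcoin A
  have hq : 0 < q := hp.trans_le hpq
  refine ⟨C, hC, fun m x => ?_⟩
  rw [Fin.prod_univ_add]
  set W := ∏ i : Fin k, weakNorm 𝕜 (qs (Fin.castAdd l i)) (x (Fin.castAdd l i)) with hW
  set V := ∏ i : Fin l, weakNorm 𝕜 (qs (Fin.natAdd k i)) (x (Fin.natAdd k i)) with hV
  have hW0 : 0 ≤ W := Finset.prod_nonneg fun i _ => weak_nonneg 𝕜 _ _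
  have hV0 : 0 ≤ V := Finset.prod_nonneg fun i _ => weak_nonneg 𝕜 _ _
  set c : Fin m → ℝ := fun j => ‖A (fun i => x i j)‖ with hc
  have hc0 : ∀ j, 0 ≤ c j := fun j => norm_nonneg _
  set S := ∑ j, c j ^ q with hS
  change S ^ (1 / q) ≤ C * (W * V)
  have hS0 : 0 ≤ S := Finset.sum_nonneg fun j _ => Real.rpow_nonneg (hc0 j) _
  rcases eq_or_lt_of_le hS0 with hSz | hSpos
  · rw [← hSz, Real.zero_rpow (by positivity)]
    positivity
  have hβ : ∀ i : Fin l, 0 ≤ 1 - 1 / qs (Fin.natAdd k i) := fun i => by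
    have := (hqs i).1
    rw [sub_nonneg, div_le_one (by linarith)]
    exact this
  have hsum : ∑ i : Fin l, (1 - 1 / qs (Fin.natAdd k i)) = 1 / p - 1 / q := by
    rw [Finset.sum_sub_distrib]
    simp only [Finset.sum_const, Finset.card_univ, Fintype.card_fin, nsmul_eq_mul, mul_one]
    linarith
  let s : Fin m → Fin (k + l) → 𝕜 := fun j => Fin.addCases (motive := fun _ => 𝕜) (fun _ => 1)
    (fun i => ((c j ^ (q * (1 - 1 / qs (Fin.natAdd k i))) : ℝ) : 𝕜))
  have hsl : ∀ j i, s j (Fin.castAdd l i) = 1 := fun j i => by simp [s]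
  have hsr : ∀ j i, s j (Fin.natAdd k i) =
      ((c j ^ (q * (1 - 1 / qs (Fin.natAdd k i))) : ℝ) : 𝕜) := fun j i => by
    simp only [s, Fin.addCases_right]
  have h1 := hone m (fun i j => s j i • x i j)
  have hterm : ∀ j, ‖A (fun i => s j i • x i j)‖ ^ p = c j ^ q := by
    intro j
    rw [A.map_smul_univ, norm_smul, norm_prod, Fin.prod_univ_add]
    simp only [hsl, hsr, norm_one, Finset.prod_const_one, one_mul, RCLike.norm_ofReal]
    have : ∏ i : Fin l, |c j ^ (q * (1 - 1 / qs (Fin.natAdd k i)))| =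
        c j ^ (q * (1 / p - 1 / q)) := by
      rw [← hsum, Finset.mul_sum, Real.rpow_sum_of_nonneg (hc0 j)
        (fun i _ => mul_nonneg hq.le (hβ i))]
      exact Finset.prod_congr rfl fun i _ => abs_of_nonneg (Real.rpow_nonneg (hc0 j) _)
    rw [this]
    change (c j ^ (q * (1 / p - 1 / q)) * c j) ^ p = c j ^ q
    have h0 : 0 ≤ q * (1 / p - 1 / q) := by
      rw [← hsum]
      exact mul_nonneg hq.le (Finset.sum_nonneg fun i _ => hβ i)
    have h2 : c j ^ (q * (1 / p - 1 / q)) * c j = c j ^ (q / p) := by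
      conv_lhs => rw [← Real.rpow_one (c j), ← Real.rpow_mul (hc0 j), one_mul]
      rw [← Real.rpow_add_of_nonneg (hc0 j) h0 zero_le_one]
      congr 1
      field_simp
      ring
    rw [h2, ← Real.rpow_mul (hc0 j), div_mul_cancel₀ _ hp.ne']
  simp only [hterm] at h1
  simp only [hsl, hsr, one_smul] at h1
  have h2 : ∏ i : Fin l, weakNorm 𝕜 1 (fun j =>
      ((c j ^ (q * (1 - 1 / qs (Fin.natAdd k i))) : ℝ) : 𝕜) • x (Fin.natAdd k i) j) ≤
        S ^ (1 / p - 1 / q) * V := by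
    rw [← hsum, Real.rpow_sum_of_pos hSpos, hV, ← Finset.prod_mul_distrib]
    exact Finset.prod_le_prod (fun i _ => weak_nonneg 𝕜 _ _) fun i _ =>
      weak_smul_le _ c hc0 hq (hqs i).1
  have h3 : S ^ (1 / p) ≤ C * (W * (S ^ (1 / p - 1 / q) * V)) :=
    h1.trans (by gcongr)
  have h4 : S ^ (1 / p) = S ^ (1 / p - 1 / q) * S ^ (1 / q) := by
    rw [← Real.rpow_add hSpos]
    congr 1
    ring
  have h5 : 0 < S ^ (1 / p - 1 / q) := Real.rpow_pos_of_pos hSpos _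
  refine le_of_mul_le_mul_left ?_ h5
  rw [← h4]
  linarith
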